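/- arXiv:0806.1214 — 3 statements merged into one kernel-verified Lean document; each statement's English description precedes it below -/
import Mathlib

section
/- Let X and Y be finite sets with |X| = m and |Y| = n, both at least 1. The number of spanning trees of the complete bipartite graph K_{m,n} is m^(n-1) * n^(m-1). -/
/-!
Fix a root `r`. A spanning tree of `G` is the same thing as a choice, for every vertex `v ≠ r`, of a
neighbour `p v` such that following `p` from any vertex leads to `r`.

Row `v ≠ r` of the Laplacian is the sum over the neighbours `w` of `v` of the rows `e_v - e_w`.
Expanding the `(r, r)` cofactor multilinearly in its rows yields one determinant for each choice `p`
of a neighbour of every `v ≠ r`. It equals `1` if `p` always leads to `r`, since the matrix is then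
unitriangular for the distance to `r`, and `0` otherwise, since the indicator of the vertices that
never reach `r` is in the kernel. So the cofactor counts spanning trees. For a complete
bipartite graph it is evaluated with a Schur complement.
-/

open Matrix Finset

section ParentMap

variable {V : Type*}

/-- The iterates of `p` lead from every vertex to `r`. -/
def IteratesReach (p : V → V) (r : V) : Prop :=
  ∀ v, ∃ k, p^[k] v = r

/-- The graph of a self-map `p`, joining every `v` to `p v`; fixed points contribute no edge. -/
def mapGraph (p : V → V) : SimpleGraph V :=
  SimpleGraph.fromRel fun u v => p u = v

/-- `p` sends each vertex to its parent in a spanning tree of `G` rooted at `r`. The root is its own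
parent, so that `p` is a self-map and can be iterated. -/
structure IsParentMap (G : SimpleGraph V) (r : V) (p : V → V) : Prop where
  map_root : p r = r
  adj : ∀ v ≠ r, G.Adj v (p v)
  iteratesReach : IteratesReach p r

lemma iteratesReach_iff_exists_rank {p : V → V} {r : V} :
    IteratesReach p r ↔ ∃ d : V → ℕ, ∀ v ≠ r, d (p v) < d v := by
  classical
  constructor
  · intro h
    refine ⟨fun v => Nat.find (h v), fun v hv => ?_⟩
    obtain ⟨k, hk⟩ : ∃ k, Nat.find (h v) = k + 1 :=
      Nat.exists_eq_succ_of_ne_zero fun h0 => hv ((Nat.find_eq_zero (h v)).1 h0)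
    have hpv : p^[k] (p v) = r := by
      have hspec := Nat.find_spec (h v)
      rwa [hk] at hspec
    calc Nat.find (h (p v)) ≤ k := Nat.find_min' (h (p v)) hpv
      _ < k + 1 := k.lt_succ_self
      _ = Nat.find (h v) := hk.symm
  · rintro ⟨d, hd⟩ v
    induction hn : d v using Nat.strong_induction_on generalizing v with
    | _ n ih =>
      by_cases hv : v = r
      · exact ⟨0, hv⟩
      · obtain ⟨k, hk⟩ := ih _ (hn ▸ hd v hv) (p v) rfl
        exact ⟨k + 1, hk⟩

lemma exists_iterate_apply_eq_iff {p : V → V} {r v : V} (hv : v ≠ r) :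
    (∃ k, p^[k] (p v) = r) ↔ ∃ k, p^[k] v = r := by
  refine ⟨fun ⟨k, hk⟩ => ⟨k + 1, hk⟩, ?_⟩
  rintro ⟨_ | k, hk⟩
  · exact absurd hk hv
  · exact ⟨k, hk⟩

lemma mapGraph_adj {p : V → V} {u v : V} :
    (mapGraph p).Adj u v ↔ u ≠ v ∧ (p u = v ∨ p v = u) :=
  SimpleGraph.fromRel_adj _ _ _

lemma mapGraph_reachable_apply (p : V → V) (v : V) : (mapGraph p).Reachable v (p v) := by
  by_cases h : v = p v
  · exact h ▸ SimpleGraph.Reachable.refl _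
  · exact (mapGraph_adj.2 ⟨h, Or.inl rfl⟩).reachable

lemma mapGraph_reachable_iterate (p : V → V) (v : V) (k : ℕ) :
    (mapGraph p).Reachable v (p^[k] v) := by
  induction k with
  | zero => exact SimpleGraph.Reachable.refl _
  | succ k ih =>
    rw [Function.iterate_succ_apply']
    exact ih.trans (mapGraph_reachable_apply p _)

lemma IteratesReach.connected_mapGraph {p : V → V} {r : V} (h : IteratesReach p r) :
    (mapGraph p).Connected := by
  have hr (v : V) : (mapGraph p).Reachable v r := by
    obtain ⟨k, hk⟩ := h v
    exact hk ▸ mapGraph_reachable_iterate p v k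
  exact { preconnected := fun u v => (hr u).trans (hr v).symm, nonempty := ⟨r⟩ }

lemma edgeSet_mapGraph_subset {p : V → V} {r : V} (hr : p r = r) :
    (mapGraph p).edgeSet ⊆ (fun v => s(v, p v)) '' {r}ᶜ := by
  have ne_root {u v : V} (huv : u ≠ v) (hu : p u = v) : u ∈ ({r}ᶜ : Set V) := by
    rintro rfl
    exact huv (hr.symm.trans hu)
  rintro ⟨u, v⟩ he
  obtain ⟨huv, hu | hv⟩ := mapGraph_adj.1 he
  · exact ⟨u, ne_root huv hu, congrArg (s(u, ·)) hu⟩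
  · exact ⟨v, ne_root huv.symm hv, (congrArg (s(v, ·)) hv).trans Sym2.eq_swap⟩

lemma IteratesReach.isTree_mapGraph [Finite V] {p : V → V} {r : V} (h : IteratesReach p r)
    (hr : p r = r) : (mapGraph p).IsTree := by
  have hconn := h.connected_mapGraph
  have hcard : (mapGraph p).edgeSet.ncard + 1 ≤ Nat.card V :=
    calc (mapGraph p).edgeSet.ncard + 1
        ≤ ((fun v => s(v, p v)) '' {r}ᶜ).ncard + 1 :=
          Nat.add_le_add_right (Set.ncard_le_ncard (edgeSet_mapGraph_subset hr)) 1
      _ ≤ ({r}ᶜ : Set V).ncard + ({r} : Set V).ncard := by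
          rw [Set.ncard_singleton]
          exact Nat.add_le_add_right (Set.ncard_image_le) 1
      _ = Nat.card V := by rw [add_comm, Set.ncard_add_ncard_compl]
  exact SimpleGraph.isTree_iff_connected_and_card.2
    ⟨hconn, hcard.antisymm hconn.card_vert_le_card_edgeSet_add_one⟩

lemma exists_adj_dist_lt {G : SimpleGraph V} {v r : V} (h : G.Reachable v r) (hv : v ≠ r) :
    ∃ w, G.Adj v w ∧ G.dist w r < G.dist v r := by
  obtain ⟨W, hW⟩ := h.exists_walk_length_eq_dist
  cases W with
  | nil => exact absurd rfl hv
  | cons hadj W' =>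
    rw [SimpleGraph.Walk.length_cons] at hW
    exact ⟨_, hadj, by have := SimpleGraph.dist_le W'; omega⟩

lemma exists_isParentMap_of_connected {G : SimpleGraph V} (hG : G.Connected) (r : V) :
    ∃ p, IsParentMap G r p := by
  classical
  choose! f hadj hdist using fun v => exists_adj_dist_lt (hG.preconnected v r)
  have hf (v : V) (hv : v ≠ r) : Function.update f r r v = f v := Function.update_of_ne hv _ _
  refine ⟨Function.update f r r, Function.update_self _ _ _, fun v hv => ?_,
    iteratesReach_iff_exists_rank.2 ⟨(G.dist · r), fun v hv => ?_⟩⟩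
  · exact hf v hv ▸ hadj v hv
  · exact hf v hv ▸ hdist v hv

namespace IsParentMap

variable {G H : SimpleGraph V} {r : V} {p q : V → V}

lemma mono (hp : IsParentMap H r p) (hle : H ≤ G) : IsParentMap G r p :=
  ⟨hp.map_root, fun v hv => hle (hp.adj v hv), hp.iteratesReach⟩

lemma mapGraph_le (hp : IsParentMap G r p) : mapGraph p ≤ G := by
  have adj_of_map_eq {u v : V} (huv : u ≠ v) (hu : p u = v) : G.Adj u v := by
    have hur : u ≠ r := by
      rintro rfl
      exact huv (hp.map_root.symm.trans hu)
    exact hu ▸ hp.adj u hur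
  intro u v he
  obtain ⟨huv, hu | hv⟩ := mapGraph_adj.1 he
  · exact adj_of_map_eq huv hu
  · exact (adj_of_map_eq huv.symm hv).symm

lemma mapGraph_eq (hp : IsParentMap G r p) (hG : G.IsTree) : mapGraph p = G :=
  hp.mapGraph_le.antisymm <|
    (SimpleGraph.isTree_iff_minimal_connected.1 hG).2 hp.iteratesReach.connected_mapGraph
      hp.mapGraph_le

lemma apply_apply_ne (hp : IsParentMap G r p) {v : V} (hv : v ≠ r) : p (p v) ≠ v := by
  obtain ⟨d, hd⟩ := iteratesReach_iff_exists_rank.1 hp.iteratesReach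
  intro h
  have hpv : p v ≠ r := fun hpv => hv (by rw [← h, hpv, hp.map_root])
  have h₁ := hd v hv
  have h₂ := hd (p v) hpv
  rw [h] at h₂
  exact h₁.not_gt h₂

lemma eq_of_mapGraph_eq (hp : IsParentMap G r p) (hq : IsParentMap G r q)
    (h : mapGraph p = mapGraph q) : p = q := by
  obtain ⟨d, hd⟩ := iteratesReach_iff_exists_rank.1 hp.iteratesReach
  funext v
  induction hn : d v using Nat.strong_induction_on generalizing v with
  | _ n ih =>
    by_cases hv : v = r
    · rw [hv, hp.map_root, hq.map_root]
    have hpq : p (p v) = q (p v) := ih _ (hn ▸ hd v hv) (p v) rfl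
    have hadj : (mapGraph q).Adj v (p v) :=
      h ▸ mapGraph_adj.2 ⟨(hp.adj v hv).ne, Or.inl rfl⟩
    rcases (mapGraph_adj.1 hadj).2 with hqv | hqv
    · exact hqv.symm
    · exact absurd (hpq.trans hqv) (hp.apply_apply_ne hv)

end IsParentMap

lemma bijOn_mapGraph [Finite V] (G : SimpleGraph V) (r : V) :
    Set.BijOn mapGraph {p | IsParentMap G r p} {H | H ≤ G ∧ H.IsTree} := by
  refine ⟨fun p hp => ⟨hp.mapGraph_le, hp.iteratesReach.isTree_mapGraph hp.map_root⟩,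
    fun p hp q hq h => hp.eq_of_mapGraph_eq hq h, ?_⟩
  rintro H ⟨hle, hH⟩
  obtain ⟨p, hp⟩ := exists_isParentMap_of_connected hH.connected r
  exact ⟨p, hp.mono hle, hp.mapGraph_eq hH⟩

end ParentMap

section MatrixTree

variable {V : Type*} [DecidableEq V]

/-- The contribution `e_v - e_w` of the edge from `v` to its parent `w` to row `v` of the Laplacian,
where row `r` has been replaced by `e_r`. -/
def parentRow (R : Type*) [AddGroupWithOne R] (r v w : V) : V → R :=
  Pi.single v 1 - if v = r then 0 else Pi.single w 1

/-- The matrix `1 - P`, where `P` is the adjacency matrix of the arcs `v → p v` for `v ≠ r`. -/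
def parentMatrix (R : Type*) [AddGroupWithOne R] (r : V) (p : V → V) : Matrix V V R :=
  of fun v => parentRow R r v (p v)

lemma parentMatrix_apply {R : Type*} [AddGroupWithOne R] (r : V) (p : V → V) (v u : V) :
    parentMatrix R r p v u =
      (if u = v then 1 else 0) - if v = r then 0 else if u = p v then 1 else 0 := by
  by_cases hv : v = r <;> simp [parentMatrix, parentRow, Pi.single_apply, hv]

variable [Fintype V]

lemma parentMatrix_mulVec {R : Type*} [NonAssocRing R] (r : V) (p : V → V) (x : V → R) (v : V) :
    (parentMatrix R r p *ᵥ x) v = x v - if v = r then 0 else x (p v) := by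
  by_cases hv : v = r <;>
    simp [mulVec, dotProduct, parentMatrix_apply, sub_mul, sum_sub_distrib, hv]

variable {R : Type*} [CommRing R]

lemma det_parentMatrix_of_iteratesReach {r : V} {p : V → V} (h : IteratesReach p r) :
    (parentMatrix R r p).det = 1 := by
  obtain ⟨d, hd⟩ := iteratesReach_iff_exists_rank.1 h
  have entry_eq_one {v u : V} (hle : d v ≤ d u) :
      parentMatrix R r p v u = (1 : Matrix V V R) v u := by
    by_cases hv : v = r
    · simp [parentMatrix_apply, one_apply, hv, eq_comm]
    · have hu : u ≠ p v := by
        rintro rfl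
        exact (hd v hv).not_ge hle
      simp [parentMatrix_apply, one_apply, hv, hu, eq_comm]
  have htri : (parentMatrix R r p).BlockTriangular (OrderDual.toDual ∘ d) := by
    intro v u huv
    have hlt : d v < d u := huv
    rw [entry_eq_one hlt.le, one_apply_ne (ne_of_apply_ne d hlt.ne)]
  have hblock (k : ℕᵒᵈ) : (parentMatrix R r p).toSquareBlock (OrderDual.toDual ∘ d) k = 1 := by
    ext ⟨v, hv⟩ ⟨u, hu⟩
    have hle : d v ≤ d u := (OrderDual.toDual.injective (hv.trans hu.symm)).le
    simp [toSquareBlock_def, entry_eq_one hle, one_apply]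
  rw [htri.det]
  exact prod_eq_one fun k _ => by rw [hblock, det_one]

lemma det_parentMatrix_of_not_iteratesReach {r : V} {p : V → V} (h : ¬ IteratesReach p r) :
    (parentMatrix R r p).det = 0 := by
  classical
  let x : V → R := fun v => if ∃ k, p^[k] v = r then 0 else 1
  have hker : parentMatrix R r p *ᵥ x = 0 := by
    ext v
    rw [parentMatrix_mulVec]
    by_cases hv : v = r
    · have hreach : ∃ k, p^[k] v = r := ⟨0, hv⟩
      simp only [x, if_pos hreach, if_pos hv, sub_zero, Pi.zero_apply]
    · simp only [x, exists_iterate_apply_eq_iff hv, if_neg hv, sub_self, Pi.zero_apply]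
  obtain ⟨v, hv⟩ := not_forall.1 h
  have hx : x v ∈ nonZeroDivisors R := by
    simp only [x, if_neg hv, one_mem]
  exact det_eq_zero_of_mulVec_eq_zero_of_mem_nonZeroDivisors hker hx

variable (R) (G : SimpleGraph V) [DecidableRel G.Adj]

/-- The vertices that may be chosen as the parent of `v` in a spanning tree of `G` rooted at `r`,
where the root is its own parent. -/
def parentCandidates (r v : V) : Finset V :=
  if v = r then {r} else G.neighborFinset v

variable {G} in
lemma isParentMap_iff_mem_piFinset {r : V} {p : V → V} :
    IsParentMap G r p ↔ p ∈ Fintype.piFinset (parentCandidates G r) ∧ IteratesReach p r := by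
  simp only [Fintype.mem_piFinset, parentCandidates]
  constructor
  · intro h
    refine ⟨fun v => ?_, h.iteratesReach⟩
    by_cases hv : v = r
    · simp [hv, h.map_root]
    · simpa [hv] using h.adj v hv
  · rintro ⟨hmem, hreach⟩
    exact ⟨by simpa using hmem r, fun v hv => by simpa [hv] using hmem v, hreach⟩

lemma updateRow_lapMatrix_eq_sum_parentRow (R : Type*) [AddCommGroupWithOne R] (r : V) :
    (G.lapMatrix R).updateRow r (Pi.single r 1) =
      of fun v => ∑ w ∈ parentCandidates G r v, parentRow R r v w := by
  ext v u
  by_cases hv : v = r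
  · subst hv
    simp [parentCandidates, parentRow]
  · simp [parentCandidates, parentRow, hv, SimpleGraph.lapMatrix, SimpleGraph.degMatrix,
      diagonal_apply, Pi.single_apply, eq_comm (a := u)]

/-- The **matrix-tree theorem**. -/
theorem ncard_isTree_le_eq_adjugate_lapMatrix (r : V) :
    ({H : SimpleGraph V | H ≤ G ∧ H.IsTree}.ncard : R) = (G.lapMatrix R).adjugate r r := by
  classical
  let choices := Fintype.piFinset (parentCandidates G r)
  have hset : {p | IsParentMap G r p} = ↑{p ∈ choices | IteratesReach p r} := by
    ext p
    simp [choices, isParentMap_iff_mem_piFinset]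
  calc ({H : SimpleGraph V | H ≤ G ∧ H.IsTree}.ncard : R)
      = #{p ∈ choices | IteratesReach p r} := by
        rw [← (bijOn_mapGraph G r).image_eq, (bijOn_mapGraph G r).injOn.ncard_image, hset,
          Set.ncard_coe_finset]
    _ = ∑ p ∈ choices, if IteratesReach p r then 1 else 0 := (sum_boole _ _).symm
    _ = ∑ p ∈ choices, (parentMatrix R r p).det := by
        refine sum_congr rfl fun p _ => ?_
        split_ifs with h
        · exact (det_parentMatrix_of_iteratesReach h).symm
        · exact (det_parentMatrix_of_not_iteratesReach h).symm
    _ = det (of fun v => ∑ w ∈ parentCandidates G r v, parentRow R r v w) :=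
        (detRowAlternating.toMultilinearMap.map_sum_finset (parentRow R r) _).symm
    _ = (G.lapMatrix R).adjugate r r := by
        rw [adjugate_apply, updateRow_lapMatrix_eq_sum_parentRow]

end MatrixTree

section CompleteBipartite

lemma det_diagonal_const_sub_vecMulVec {ι R : Type*} [Fintype ι] [DecidableEq ι] [CommRing R]
    (c : R) (u v : ι → R) :
    (diagonal (fun _ => c) - vecMulVec u v).det =
      c ^ Fintype.card ι - (u ⬝ᵥ v) * c ^ (Fintype.card ι - 1) := by
  simpa [eval_charpoly] using congrArg (Polynomial.eval c) (charpoly_vecMulVec u v)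

variable {α β : Type*} [Fintype α] [DecidableEq α] [Fintype β] [DecidableEq β]

lemma lapMatrix_completeBipartiteGraph (R : Type*) [AddGroupWithOne R]
    [DecidableRel (completeBipartiteGraph α β).Adj] :
    (completeBipartiteGraph α β).lapMatrix R =
      fromBlocks (diagonal fun _ => (Fintype.card β : R)) (of fun _ _ => -1)
        (of fun _ _ => -1) (diagonal fun _ => (Fintype.card α : R)) := by
  have neighborFinset_inl (a : α) : (completeBipartiteGraph α β).neighborFinset (Sum.inl a) =
      univ.map Function.Embedding.inr := by
    ext w; cases w <;> simp
  have neighborFinset_inr (b : β) : (completeBipartiteGraph α β).neighborFinset (Sum.inr b) =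
      univ.map Function.Embedding.inl := by
    ext w; cases w <;> simp
  ext (i | i) (j | j) <;>
    simp [SimpleGraph.lapMatrix, SimpleGraph.degMatrix, diagonal_apply,
      ← SimpleGraph.card_neighborFinset_eq_degree, neighborFinset_inl, neighborFinset_inr]

lemma updateRow_inl_fromBlocks {ι κ R : Type*} [DecidableEq ι] [DecidableEq κ] [Zero R] [One R]
    (A : Matrix ι ι R) (B : Matrix ι κ R) (C : Matrix κ ι R) (D : Matrix κ κ R) (i : ι) :
    (fromBlocks A B C D).updateRow (Sum.inl i) (Pi.single (Sum.inl i) 1) =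
      fromBlocks (A.updateRow i (Pi.single i 1)) (B.updateRow i 0) C D := by
  ext (j | j) (k | k) <;> simp [updateRow_apply, Pi.single_apply]

lemma det_fromBlocks_diagonal_const {K : Type*} [Field K] {d : α → K} (hd : ∀ i, d i ≠ 0)
    (u v : α → K) (c : K) :
    (fromBlocks (diagonal d) (of fun i _ => u i) (of fun _ i => v i)
      (diagonal fun _ : β => c)).det =
      (∏ i, d i) * (c ^ Fintype.card β -
        Fintype.card β * (∑ i, v i * u i / d i) * c ^ (Fintype.card β - 1)) := by
  have hunit : IsUnit (diagonal d) := by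
    simpa [isUnit_diagonal, Pi.isUnit_iff] using hd
  have := hunit.invertible
  have hinv : ⅟(diagonal d) = diagonal d⁻¹ := by
    refine invOf_eq_right_inv ?_
    rw [diagonal_mul_diagonal, ← diagonal_one]
    simp [hd]
  have hschur : (of fun (_ : β) i => v i) * ⅟(diagonal d) * (of fun i (_ : β) => u i) =
      vecMulVec (fun _ => ∑ i, v i * u i / d i) (fun _ => 1) := by
    ext j k
    simp [hinv, mul_apply, diagonal_apply, vecMulVec_apply, div_eq_mul_inv, mul_right_comm]
  rw [det_fromBlocks₁₁, det_diagonal, hschur, det_diagonal_const_sub_vecMulVec]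
  simp [dotProduct]

lemma adjugate_lapMatrix_completeBipartiteGraph (K : Type*) [Field K] [CharZero K] [Nonempty β]
    [DecidableRel (completeBipartiteGraph α β).Adj] (a : α) :
    ((completeBipartiteGraph α β).lapMatrix K).adjugate (Sum.inl a) (Sum.inl a) =
      (Fintype.card α : K) ^ (Fintype.card β - 1) *
        (Fintype.card β : K) ^ (Fintype.card α - 1) := by
  let d : α → K := Function.update (fun _ => (Fintype.card β : K)) a 1
  let u : α → K := Function.update (fun _ => -1) a 0
  have hd0 (i : α) : d i ≠ 0 := by
    by_cases hi : i = a <;> simp [d, hi]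
  have hblocks : ((completeBipartiteGraph α β).lapMatrix K).updateRow (Sum.inl a)
      (Pi.single (Sum.inl a) 1) = fromBlocks (diagonal d) (of fun i _ => u i)
        (of fun _ _ => -1) (diagonal fun _ => (Fintype.card α : K)) := by
    rw [lapMatrix_completeBipartiteGraph, updateRow_inl_fromBlocks, diagonal_updateRow_single]
    congr 1
    ext i j
    by_cases hi : i = a <;> simp [u, hi]
  have hprod : ∏ i, d i = (Fintype.card β : K) ^ (Fintype.card α - 1) := by
    simp [d, prod_update_of_mem, card_sdiff]
  have hsum : Fintype.card β * ∑ i, -1 * u i / d i = (Fintype.card α : K) - 1 := by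
    have hterm (i : α) : Fintype.card β * (-1 * u i / d i) = 1 - (Pi.single a 1 : α → K) i := by
      by_cases hi : i = a <;> simp [d, u, hi]
    rw [mul_sum, sum_congr rfl fun i _ => hterm i]
    simp
  rw [adjugate_apply, hblocks, det_fromBlocks_diagonal_const hd0, hprod, hsum,
    ← pow_sub_one_mul Fintype.card_ne_zero (Fintype.card α : K)]
  ring

end CompleteBipartite

theorem stmt_0_general (α β : Type*) [Finite α] [Finite β] [Nonempty α] [Nonempty β] :
    {H : SimpleGraph (α ⊕ β) | H ≤ completeBipartiteGraph α β ∧ H.IsTree}.ncard =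
      Nat.card α ^ (Nat.card β - 1) * Nat.card β ^ (Nat.card α - 1) := by
  classical
  have := Fintype.ofFinite α
  have := Fintype.ofFinite β
  obtain ⟨a⟩ := ‹Nonempty α›
  have h := (ncard_isTree_le_eq_adjugate_lapMatrix ℚ (completeBipartiteGraph α β) (Sum.inl a)).trans
    (adjugate_lapMatrix_completeBipartiteGraph ℚ a)
  rw [Nat.card_eq_fintype_card, Nat.card_eq_fintype_card]
  exact_mod_cast h

theorem stmt_0 (m n : ℕ) (hm : 1 ≤ m) (hn : 1 ≤ n) :
    {H : SimpleGraph (Fin m ⊕ Fin n) |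
        H ≤ completeBipartiteGraph (Fin m) (Fin n) ∧ H.IsTree}.ncard
      = m ^ (n - 1) * n ^ (m - 1) := by
  have : NeZero m := ⟨by omega⟩
  have : NeZero n := ⟨by omega⟩
  simpa using stmt_0_general (Fin m) (Fin n)
end

section
/- The ratio m^(n-1) * n^(m-1) / C(mn, m+n-1) tends to 0 as m and n both tend to infinity. -/
/-!
Write `k = m + n - 1`. Since `m * n + 1 - k > (m - 1) * (n - 1)`, the binomial coefficient is at
least `((m - 1) * (n - 1)) ^ k / k!`, so the ratio is at most
`(m / (m - 1)) ^ k * (n / (n - 1)) ^ k * k! / (m ^ m * n ^ n)`.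
For `m ≤ n`, Stirling's bound `k! ≤ e * ((m + n) / e) ^ (m + n)` together with
`(1 + m / n) ^ n ≤ e ^ m` and `(1 + n / m) ^ m ≤ 2 ^ n` bounds the last factor by `e * (2 / e) ^ n`.
This exponential decay beats the first two factors, which are `e ^ O(n / m)`.
-/

open scoped Nat

theorem add_pow_le_pow_mul_exp {x t : ℝ} (hx : 0 < x) (hxt : 0 ≤ x + t) (k : ℕ) :
    (x + t) ^ k ≤ x ^ k * Real.exp (k * (t / x)) := by
  have base : x + t ≤ x * Real.exp (t / x) :=
    calc x + t = x * (t / x + 1) := by field_simp; ring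
      _ ≤ x * Real.exp (t / x) := by gcongr; exact Real.add_one_le_exp _
  calc (x + t) ^ k ≤ (x * Real.exp (t / x)) ^ k := by gcongr
    _ = x ^ k * Real.exp (k * (t / x)) := by rw [mul_pow, Real.exp_nat_mul]

theorem factorial_le_succ_pow_mul_exp_neg (k : ℕ) :
    (k ! : ℝ) ≤ ((k : ℝ) + 1) ^ (k + 1) * Real.exp (-k) := by
  induction k with
  | zero => simp
  | succ k ih =>
    have shift : ((k : ℝ) + 1) ^ (k + 2) ≤ ((k : ℝ) + 2) ^ (k + 2) * Real.exp (-1) := by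
      have h := add_pow_le_pow_mul_exp (x := (k : ℝ) + 2) (t := -1) (by positivity)
        (by linarith [k.cast_nonneg (α := ℝ)]) (k + 2)
      have exponent : ((k + 2 : ℕ) : ℝ) * (-1 / ((k : ℝ) + 2)) = -1 := by
        push_cast
        field_simp
      rwa [exponent, show (k : ℝ) + 2 + -1 = k + 1 by ring] at h
    calc ((k + 1)! : ℝ) = ((k : ℝ) + 1) * k ! := by push_cast [Nat.factorial_succ]; ring
      _ ≤ ((k : ℝ) + 1) * (((k : ℝ) + 1) ^ (k + 1) * Real.exp (-k)) := by gcongr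
      _ = ((k : ℝ) + 1) ^ (k + 2) * Real.exp (-k) := by ring
      _ ≤ ((k : ℝ) + 2) ^ (k + 2) * Real.exp (-1) * Real.exp (-k) := by gcongr
      _ = ((k + 1 : ℕ) + 1 : ℝ) ^ (k + 1 + 1) * Real.exp (-(k + 1 : ℕ)) := by
        rw [mul_assoc, ← Real.exp_add]
        push_cast
        ring_nf

theorem add_pow_left_le_two_pow_mul_pow {m n : ℕ} (hmn : m ≤ n) :
    ((m : ℝ) + n) ^ m ≤ 2 ^ n * (m : ℝ) ^ m := by
  rcases m.eq_zero_or_pos with rfl | hm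
  · simpa using one_le_pow₀ (one_le_two (α := ℝ))
  have bernoulli : 1 + (n : ℝ) / m ≤ 2 ^ ((n : ℝ) / m) := by
    have h := one_add_mul_self_le_rpow_one_add (s := 1) (by norm_num)
      (p := (n : ℝ) / m) ((one_le_div (by positivity)).2 (by exact_mod_cast hmn))
    norm_num at h
    exact h
  calc ((m : ℝ) + n) ^ m = (1 + (n : ℝ) / m) ^ m * (m : ℝ) ^ m := by
        rw [← mul_pow]
        field_simp
    _ ≤ ((2 : ℝ) ^ ((n : ℝ) / m)) ^ m * (m : ℝ) ^ m := by gcongr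
    _ = 2 ^ n * (m : ℝ) ^ m := by
        rw [← Real.rpow_mul_natCast zero_le_two, div_mul_cancel₀ _ (by positivity),
          Real.rpow_natCast]

theorem add_pow_add_le_exp_mul_pow_mul_pow {m n : ℕ} (hmn : m ≤ n) :
    ((m : ℝ) + n) ^ (m + n) ≤
      Real.exp (m + n * Real.log 2) * ((m : ℝ) ^ m * (n : ℝ) ^ n) := by
  rcases n.eq_zero_or_pos with rfl | hn
  · obtain rfl : m = 0 := by omega
    simp
  have right : ((m : ℝ) + n) ^ n ≤ (n : ℝ) ^ n * Real.exp m := by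
    have h := add_pow_le_pow_mul_exp (x := n) (t := m) (by positivity) (by positivity) n
    rwa [mul_div_cancel₀ _ (by positivity), add_comm (n : ℝ)] at h
  calc ((m : ℝ) + n) ^ (m + n) = ((m : ℝ) + n) ^ m * ((m : ℝ) + n) ^ n := pow_add ..
    _ ≤ (2 ^ n * (m : ℝ) ^ m) * ((n : ℝ) ^ n * Real.exp m) := by
        gcongr
        exact add_pow_left_le_two_pow_mul_pow hmn
    _ = Real.exp (m + n * Real.log 2) * ((m : ℝ) ^ m * (n : ℝ) ^ n) := by
        rw [Real.exp_add, Real.exp_nat_mul, Real.exp_log zero_lt_two]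
        ring

-- Here and below `a = m - 1` and `b = n - 1`, which avoids truncated subtraction.
theorem factorial_add_succ_le_exp_mul_pow_mul_pow {a b : ℕ} (hab : a ≤ b) :
    ((a + b + 1)! : ℝ) ≤ Real.exp (1 - (1 - Real.log 2) * (b + 1)) *
      (((a : ℝ) + 1) ^ (a + 1) * ((b : ℝ) + 1) ^ (b + 1)) := by
  have power := add_pow_add_le_exp_mul_pow_mul_pow (Nat.succ_le_succ hab)
  have stirling := factorial_le_succ_pow_mul_exp_neg (a + b + 1)
  push_cast at power stirling
  calc ((a + b + 1)! : ℝ)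
      ≤ ((a : ℝ) + b + 1 + 1) ^ (a + b + 1 + 1) * Real.exp (-(a + b + 1)) := stirling
    _ = ((a : ℝ) + 1 + (b + 1)) ^ (a + 1 + (b + 1)) * Real.exp (-(a + b + 1)) := by ring_nf
    _ ≤ Real.exp (a + 1 + (b + 1) * Real.log 2) *
          (((a : ℝ) + 1) ^ (a + 1) * ((b : ℝ) + 1) ^ (b + 1)) * Real.exp (-(a + b + 1)) := by
        gcongr
    _ = Real.exp (1 - (1 - Real.log 2) * (b + 1)) *
          (((a : ℝ) + 1) ^ (a + 1) * ((b : ℝ) + 1) ^ (b + 1)) := by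
        rw [mul_right_comm, ← Real.exp_add]
        ring_nf

theorem mul_pow_le_factorial_mul_choose (a b : ℕ) :
    ((a : ℝ) * b) ^ (a + b + 1) ≤
      (a + b + 1)! * (((a + 1) * (b + 1)).choose (a + b + 1) : ℝ) := by
  have h := Nat.pow_le_choose (α := ℝ) (a + b + 1) ((a + 1) * (b + 1))
  have size : (a + 1) * (b + 1) + 1 - (a + b + 1) = a * b + 1 := by
    rw [show (a + 1) * (b + 1) + 1 = a * b + 1 + (a + b + 1) by ring, Nat.add_sub_cancel]
  rw [size, div_le_iff₀' (by positivity)] at h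
  refine le_trans ?_ h
  push_cast
  gcongr
  linarith

theorem succ_mul_succ_pow_le_exp_mul_factorial_mul_choose {a b : ℕ} (ha : 0 < a) (hb : 0 < b) :
    (((a : ℝ) + 1) * (b + 1)) ^ (a + b + 1) ≤
      Real.exp ((a + b + 1) * (1 / a + 1 / b)) *
        ((a + b + 1)! * (((a + 1) * (b + 1)).choose (a + b + 1) : ℝ)) := by
  have left := add_pow_le_pow_mul_exp (x := a) (t := 1) (by positivity) (by positivity) (a + b + 1)
  have right := add_pow_le_pow_mul_exp (x := b) (t := 1) (by positivity) (by positivity) (a + b + 1)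
  push_cast at left right
  calc (((a : ℝ) + 1) * (b + 1)) ^ (a + b + 1)
      = ((a : ℝ) + 1) ^ (a + b + 1) * ((b : ℝ) + 1) ^ (a + b + 1) := mul_pow ..
    _ ≤ ((a : ℝ) ^ (a + b + 1) * Real.exp ((a + b + 1) * (1 / a))) *
          ((b : ℝ) ^ (a + b + 1) * Real.exp ((a + b + 1) * (1 / b))) := by gcongr
    _ = Real.exp ((a + b + 1) * (1 / a + 1 / b)) * ((a : ℝ) * b) ^ (a + b + 1) := by
        rw [mul_add, Real.exp_add, mul_pow]
        ring
    _ ≤ _ := by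
        gcongr
        exact mul_pow_le_factorial_mul_choose a b

theorem succ_pow_mul_succ_pow_le_exp_mul_choose {a b : ℕ} (ha : 0 < a) (hab : a ≤ b) :
    ((a : ℝ) + 1) ^ b * ((b : ℝ) + 1) ^ a ≤
      Real.exp (1 - (1 - Real.log 2) * (b + 1) + (a + b + 1) * (1 / a + 1 / b)) *
        (((a + 1) * (b + 1)).choose (a + b + 1) : ℝ) := by
  set P : ℝ := ((a : ℝ) + 1) ^ (a + 1) * ((b : ℝ) + 1) ^ (b + 1)
  set C : ℝ := (((a + 1) * (b + 1)).choose (a + b + 1) : ℝ)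
  have hP : 0 < P := by positivity
  refine le_of_mul_le_mul_right ?_ hP
  calc ((a : ℝ) + 1) ^ b * ((b : ℝ) + 1) ^ a * P
      = (((a : ℝ) + 1) * (b + 1)) ^ (a + b + 1) := by
        rw [mul_pow]
        ring
    _ ≤ Real.exp ((a + b + 1) * (1 / a + 1 / b)) * ((a + b + 1)! * C) :=
        succ_mul_succ_pow_le_exp_mul_factorial_mul_choose ha (ha.trans_le hab)
    _ ≤ Real.exp ((a + b + 1) * (1 / a + 1 / b)) *
          (Real.exp (1 - (1 - Real.log 2) * (b + 1)) * P * C) := by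
        gcongr
        exact factorial_add_succ_le_exp_mul_pow_mul_pow hab
    _ = _ := by
        rw [Real.exp_add]
        ring

-- `1 - log 2 > 3 / 10`, and for `m, n > 40` the two correction terms cost at most `n / 20` each.
theorem pow_mul_pow_div_choose_le_exp_of_le {m n : ℕ} (hm : 40 < m) (hmn : m ≤ n) :
    ((m ^ (n - 1) * n ^ (m - 1) : ℕ) : ℝ) / ((m * n).choose (m + n - 1) : ℝ) ≤
      Real.exp (1 - n / 5) := by
  obtain ⟨a, rfl⟩ : ∃ a, m = a + 1 := ⟨m - 1, by omega⟩
  obtain ⟨b, rfl⟩ : ∃ b, n = b + 1 := ⟨n - 1, by omega⟩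
  have ha : (40 : ℝ) ≤ a := by exact_mod_cast Nat.lt_succ_iff.1 hm
  have hab : (a : ℝ) ≤ b := by exact_mod_cast Nat.le_of_succ_le_succ hmn
  have correction {x : ℝ} (hx : 40 ≤ x) : ((a : ℝ) + b + 1) * (1 / x) ≤ (b + 1) / 20 := by
    rw [mul_one_div, div_le_iff₀ (by linarith)]
    nlinarith
  have exponent : 1 - (1 - Real.log 2) * (b + 1) + ((a : ℝ) + b + 1) * (1 / a + 1 / b) ≤
      1 - ((b + 1 : ℕ) : ℝ) / 5 := by
    have hlog : Real.log 2 ≤ 7 / 10 := by linarith [Real.log_two_lt_d9]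
    push_cast
    nlinarith [correction ha, correction (ha.trans hab)]
  rw [show a + 1 + (b + 1) - 1 = a + b + 1 by omega, Nat.add_sub_cancel, Nat.add_sub_cancel]
  refine div_le_of_le_mul₀ (by positivity) (by positivity) ?_
  push_cast
  calc ((a : ℝ) + 1) ^ b * ((b : ℝ) + 1) ^ a
      ≤ _ := succ_pow_mul_succ_pow_le_exp_mul_choose (by omega) (by omega)
    _ ≤ _ := by
        gcongr
        exact_mod_cast exponent

theorem pow_mul_pow_div_choose_le_exp {m n : ℕ} (hm : 40 < m) (hn : 40 < n) :
    ((m ^ (n - 1) * n ^ (m - 1) : ℕ) : ℝ) / ((m * n).choose (m + n - 1) : ℝ) ≤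
      Real.exp (1 - max m n / 5) := by
  wlog hmn : m ≤ n generalizing m n
  · have h := this hn hm (le_of_not_ge hmn)
    rwa [mul_comm (n ^ (m - 1)), mul_comm n m, add_comm n m, max_comm] at h
  rw [max_eq_right hmn]
  exact pow_mul_pow_div_choose_le_exp_of_le hm hmn

theorem stmt_4 :
    ∀ ε : ℝ, 0 < ε → ∃ N : ℕ, ∀ m n : ℕ, N ≤ m → N ≤ n →
      ((m ^ (n - 1) * n ^ (m - 1) : ℕ) : ℝ) / ((m * n).choose (m + n - 1) : ℝ) < ε := by
  intro ε hε
  obtain ⟨K, hK⟩ := exists_nat_gt (5 * (1 - Real.log ε))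
  refine ⟨max 41 K, fun m n hm hn ↦ ?_⟩
  have hKm : (K : ℝ) ≤ max m n := by
    exact_mod_cast le_max_of_le_left (le_of_max_le_right hm)
  calc _ ≤ Real.exp (1 - max m n / 5) :=
        pow_mul_pow_div_choose_le_exp (le_of_max_le_left hm) (le_of_max_le_left hn)
    _ < ε := by
        rw [← Real.lt_log_iff_exp_lt hε]
        linarith
end

section
/- Let a finite group G act on finite sets X, Y with μ₁, μ₂ G-invariant fully supported probability measures. If μ and ν are distinct extreme points of K(μ₁,μ₂), then their supports are not both contained in a common G-good subset of X × Y; in particular μ and ν have distinct supports. -/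
open Finset

def IsGGood (G : Type*) {X Y : Type*} [Group G] [MulAction G X] [MulAction G Y]
    (S : Set (X × Y)) : Prop :=
  (∀ (g : G), ∀ p ∈ S, g • p ∈ S) ∧
  ∀ f : X × Y → ℝ, (∀ (g : G), ∀ p ∈ S, f (g • p) = f p) →
    ∃ u : X → ℝ, ∃ v : Y → ℝ,
      (∀ (g : G) (x : X), u (g • x) = u x) ∧ (∀ (g : G) (y : Y), v (g • y) = v y) ∧
      ∀ p ∈ S, f p = u p.1 + v p.2

def Kset (G : Type*) {X Y : Type*} [Group G] [MulAction G X] [MulAction G Y]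
    [Fintype X] [Fintype Y] (μ₁ : X → ℝ) (μ₂ : Y → ℝ) : Set (X × Y → ℝ) :=
  {w | (∀ p, 0 ≤ w p) ∧ (∀ (g : G) (p : X × Y), w (g • p) = w p) ∧
       (∀ x, ∑ y, w (x, y) = μ₁ x) ∧ (∀ y, ∑ x, w (x, y) = μ₂ y)}

/-! A signed measure whose two marginals vanish is orthogonal to every function `u(x) + v(y)`. If it
is also `G`-invariant and carried by a `G`-good set, it is itself of this form there, so it is
orthogonal to itself and vanishes; hence a `G`-good set carries at most one element of
`K(μ₁, μ₂)`.

For the supports themselves, let `μ` be extreme and let `ν ∈ K(μ₁, μ₂)` vanish wherever `μ` does.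
By finiteness `ν ≤ c μ` for some `c > 0`, so the segment from `ν` to `μ` can be prolonged beyond
`μ` without leaving `K(μ₁, μ₂)`, and extremality forces `ν = μ`. -/

section ExtremePoints

variable {𝕜 ι : Type*} [Field 𝕜] [LinearOrder 𝕜] [IsStrictOrderedRing 𝕜] [Finite ι]

theorem exists_pos_le_smul_of_support_subset {x y : ι → 𝕜} (hx : 0 ≤ x)
    (hsupp : Function.support y ⊆ Function.support x) : ∃ c : 𝕜, 0 < c ∧ y ≤ c • x := by
  obtain ⟨M, hM⟩ := Finite.exists_le fun i ↦ y i / x i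
  refine ⟨max M 1, lt_max_of_lt_right one_pos, fun i ↦ ?_⟩
  rcases (hx i).eq_or_lt' with hxi | hxi
  · have hyi : y i = 0 := Function.notMem_support.mp fun h ↦ hsupp h hxi
    simp [hxi, hyi]
  · exact (div_le_iff₀ hxi).mp ((hM i).trans (le_max_left M 1))

theorem eq_of_mem_extremePoints_of_support_subset {A : AffineSubspace 𝕜 (ι → 𝕜)} {x y : ι → 𝕜}
    (hx : x ∈ (Set.Ici 0 ∩ A : Set (ι → 𝕜)).extremePoints 𝕜)
    (hy : y ∈ (Set.Ici 0 ∩ A : Set (ι → 𝕜)))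
    (hsupp : Function.support y ⊆ Function.support x) : y = x := by
  obtain ⟨⟨hx_nonneg, hxA⟩, hx_extreme⟩ := hx
  obtain ⟨c, hc, hyc⟩ := exists_pos_le_smul_of_support_subset hx_nonneg hsupp
  set z : ι → 𝕜 := c⁻¹ • (x - y) + x with hz
  have hz_nonneg : 0 ≤ z := by
    have hz_eq : z = c⁻¹ • (c • x - y) + c⁻¹ • x := by
      rw [hz, smul_sub, smul_sub, inv_smul_smul₀ hc.ne']
      abel
    rw [hz_eq]
    exact add_nonneg (smul_nonneg (inv_nonneg.mpr hc.le) (sub_nonneg.mpr hyc))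
      (smul_nonneg (inv_nonneg.mpr hc.le) hx_nonneg)
  have hzA : z ∈ A := A.smul_vsub_vadd_mem c⁻¹ hxA hy.2 hxA
  have hx_between : x ∈ openSegment 𝕜 y z := by
    refine ⟨1 / (1 + c), c / (1 + c), by positivity, by positivity, by field_simp, ?_⟩
    ext i
    simp only [hz, Pi.add_apply, Pi.smul_apply, Pi.sub_apply, smul_eq_mul]
    field_simp
    ring
  exact hx_extreme hy ⟨hz_nonneg, hzA⟩ hx_between

end ExtremePoints

theorem sum_add_mul_eq_zero_of_marginals_eq_zero {R X Y : Type*} [NonUnitalNonAssocSemiring R]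
    [Fintype X] [Fintype Y] {d : X × Y → R} (hX : ∀ x, ∑ y, d (x, y) = 0)
    (hY : ∀ y, ∑ x, d (x, y) = 0) (u : X → R) (v : Y → R) :
    ∑ p, (u p.1 + v p.2) * d p = 0 := by
  have hu : ∑ p : X × Y, u p.1 * d p = 0 := by
    simp only [Fintype.sum_prod_type, ← mul_sum, hX, mul_zero, sum_const_zero]
  have hv : ∑ p : X × Y, v p.2 * d p = 0 := by
    simp only [Fintype.sum_prod_type_right, ← mul_sum, hY, mul_zero, sum_const_zero]
  simp only [add_mul, sum_add_distrib, hu, hv, add_zero]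

section InvariantCouplings

variable {G X Y : Type*} [Group G] [MulAction G X] [MulAction G Y] [Fintype X] [Fintype Y]
  {μ₁ : X → ℝ} {μ₂ : Y → ℝ}

theorem IsGGood.eq_zero_of_marginals_eq_zero {T : Set (X × Y)} (hT : IsGGood G T)
    {d : X × Y → ℝ} (hG : ∀ (g : G) (p : X × Y), d (g • p) = d p)
    (hX : ∀ x, ∑ y, d (x, y) = 0) (hY : ∀ y, ∑ x, d (x, y) = 0)
    (hsupp : Function.support d ⊆ T) : d = 0 := by
  obtain ⟨u, v, -, -, hd⟩ := hT.2 d fun g p _ ↦ hG g p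
  have hsq (p : X × Y) : d p * d p = (u p.1 + v p.2) * d p := by
    by_cases hp : d p = 0
    · simp only [hp, mul_zero]
    · rw [← hd p (hsupp hp)]
  have hsum : ∑ p, d p * d p = 0 :=
    (sum_congr rfl fun p _ ↦ hsq p).trans (sum_add_mul_eq_zero_of_marginals_eq_zero hX hY u v)
  ext p
  exact mul_self_eq_zero.mp <|
    (sum_eq_zero_iff_of_nonneg fun q _ ↦ mul_self_nonneg (d q)).mp hsum p (mem_univ p)

theorem IsGGood.eq_of_mem_Kset {T : Set (X × Y)} (hT : IsGGood G T) {μ ν : X × Y → ℝ}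
    (hμ : μ ∈ Kset G μ₁ μ₂) (hν : ν ∈ Kset G μ₁ μ₂)
    (hμT : Function.support μ ⊆ T) (hνT : Function.support ν ⊆ T) : μ = ν := by
  obtain ⟨-, hμG, hμX, hμY⟩ := hμ
  obtain ⟨-, hνG, hνX, hνY⟩ := hν
  refine sub_eq_zero.mp <| hT.eq_zero_of_marginals_eq_zero (fun g p ↦ ?_) (fun x ↦ ?_)
    (fun y ↦ ?_) ((Function.support_sub μ ν).trans (Set.union_subset hμT hνT))
  · simp only [Pi.sub_apply, hμG, hνG]
  · simp only [Pi.sub_apply, sum_sub_distrib, hμX, hνX, sub_self]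
  · simp only [Pi.sub_apply, sum_sub_distrib, hμY, hνY, sub_self]

variable (G μ₁ μ₂) in
/-- The affine space of `G`-invariant signed measures on `X × Y` with marginals `μ₁` and `μ₂`;
its nonnegative elements form `Kset G μ₁ μ₂`. -/
def invariantSignedCouplings : AffineSubspace ℝ (X × Y → ℝ) where
  carrier := {w | (∀ (g : G) (p : X × Y), w (g • p) = w p) ∧
    (∀ x, ∑ y, w (x, y) = μ₁ x) ∧ (∀ y, ∑ x, w (x, y) = μ₂ y)}
  smul_vsub_vadd_mem' := by
    rintro c w₁ w₂ w₃ ⟨hG₁, hX₁, hY₁⟩ ⟨hG₂, hX₂, hY₂⟩ ⟨hG₃, hX₃, hY₃⟩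
    refine ⟨fun g p ↦ ?_, fun x ↦ ?_, fun y ↦ ?_⟩
    · simp [hG₁, hG₂, hG₃]
    · simp [sum_add_distrib, ← mul_sum, hX₁, hX₂, hX₃]
    · simp [sum_add_distrib, ← mul_sum, hY₁, hY₂, hY₃]

theorem Kset_eq_Ici_inter_invariantSignedCouplings :
    Kset G μ₁ μ₂ = Set.Ici 0 ∩ (invariantSignedCouplings G μ₁ μ₂ : Set (X × Y → ℝ)) :=
  rfl

theorem stmt_14_general {μ ν : X × Y → ℝ} (hμ : μ ∈ (Kset G μ₁ μ₂).extremePoints ℝ)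
    (hν : ν ∈ Kset G μ₁ μ₂) (hμν : μ ≠ ν) :
    (¬ ∃ T : Set (X × Y), IsGGood G T ∧ Function.support μ ⊆ T ∧ Function.support ν ⊆ T) ∧
      ¬ Function.support ν ⊆ Function.support μ := by
  constructor
  · rintro ⟨T, hT, hμT, hνT⟩
    exact hμν (hT.eq_of_mem_Kset hμ.1 hν hμT hνT)
  · intro hsupp
    rw [Kset_eq_Ici_inter_invariantSignedCouplings] at hμ hν
    exact hμν (eq_of_mem_extremePoints_of_support_subset hμ hν hsupp).symm

end InvariantCouplings

theorem stmt_14 {G X Y : Type*} [Group G] [Finite G] [Fintype X] [Fintype Y]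
    [MulAction G X] [MulAction G Y]
    (μ₁ : X → ℝ) (μ₂ : Y → ℝ)
    (h₁pos : ∀ x, 0 < μ₁ x) (h₂pos : ∀ y, 0 < μ₂ y)
    (h₁sum : ∑ x, μ₁ x = 1) (h₂sum : ∑ y, μ₂ y = 1)
    (h₁inv : ∀ (g : G) (x : X), μ₁ (g • x) = μ₁ x)
    (h₂inv : ∀ (g : G) (y : Y), μ₂ (g • y) = μ₂ y)
    (μ ν : X × Y → ℝ)
    (hμ : μ ∈ Set.extremePoints ℝ (Kset G μ₁ μ₂))
    (hν : ν ∈ Set.extremePoints ℝ (Kset G μ₁ μ₂)) (hμν : μ ≠ ν) :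
    (¬ ∃ T : Set (X × Y), IsGGood G T ∧ {p | μ p ≠ 0} ⊆ T ∧ {p | ν p ≠ 0} ⊆ T) ∧
      {p | μ p ≠ 0} ≠ {p | ν p ≠ 0} :=
  (stmt_14_general hμ hν.1 hμν).imp_right fun hnot hsupp ↦ hnot hsupp.ge
end
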